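/- Let Γ be a group, let Γ ≅ Γ₁ * Γ₂ be a free product decomposition, and suppose Γ is the fundamental group of a closed orientable surface of genus g ≥ 0 modulo adding torsion relations (i.e., Γ has a presentation with generators α₁,...,α_g, β₁,...,β_g, γ₁,...,γ_{t+s} and relations γᵢ^{mᵢ} = 1 for i ≤ t and [α₁,β₁]⋯[α_g,β_g]γ₁⋯γ_{t+s} = 1), with each γᵢ lying in Γ₁ or Γ₂. Then Γ₁ or Γ₂ is isomorphic to a free product of cyclic groups. -/

import Mathlib

/-- The standard relations of a Fuchsian group of signature `(g; m₁,…,m_t; s)`: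
`γᵢ^{mᵢ} = 1` for `i ≤ t` and `[α₁,β₁]⋯[α_g,β_g]γ₁⋯γ_{t+s} = 1`. -/
def surfaceRels (g t s : ℕ) (m : Fin t → ℕ) :
    Set (FreeGroup (Fin g ⊕ Fin g ⊕ Fin (t + s))) :=
  {r | (∃ i : Fin t, r = FreeGroup.of (Sum.inr (Sum.inr (Fin.castAdd s i))) ^ m i) ∨
    r = (List.ofFn fun i : Fin g =>
          FreeGroup.of (Sum.inl i) * FreeGroup.of (Sum.inr (Sum.inl i)) *
            (FreeGroup.of (Sum.inl i))⁻¹ * (FreeGroup.of (Sum.inr (Sum.inl i)))⁻¹).prod *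
      (List.ofFn fun i : Fin (t + s) => FreeGroup.of (Sum.inr (Sum.inr i))).prod}

/-- A group is a free product of cyclic groups. -/
def IsFreeProductOfCyclicGroups (Γ₁ : Type*) [Group Γ₁] : Prop :=
  ∃ (ι : Type) (H : ι → Type) (inst : ∀ i, Group (H i)),
    (∀ i, letI := inst i; IsCyclic (H i)) ∧
    (letI : ∀ i, Monoid (H i) := fun i => (inst i).toMonoid
     Nonempty (Γ₁ ≃* Monoid.CoprodI H))


namespace SurfAux

theorem tele {G : Type*} [Group G] : ∀ (n : ℕ) (f : Fin n → G) (q : ℕ → G)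
    (_ : ∀ i : Fin n, q (i + 1) = q i * f i), q 0 * (List.ofFn f).prod = q n
  | 0, f, q, _ => by simp
  | n + 1, f, q, h => by
    have h0 := h 0
    have := tele n (fun i => f i.succ) (fun k => q (k + 1)) (fun i => by
      simpa using h i.succ)
    simp only [List.ofFn_succ, List.prod_cons]
    rw [← mul_assoc]
    simp only [Fin.val_zero] at h0
    rw [← h0]
    exact this

theorem exists_prefix {G : Type*} [Group G] {n : ℕ} (f : Fin n → G) (x : G) :
    ∃ q : ℕ → G, q 0 = x ∧ (∀ i : Fin n, q (i + 1) = q i * f i) ∧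
      q n = x * (List.ofFn f).prod := by
  have key : ∀ i : Fin n, x * ((List.ofFn f).take (i + 1)).prod =
      x * ((List.ofFn f).take i).prod * f i := by
    intro i
    rw [List.prod_take_succ _ _ (by simp), mul_assoc]
    simp
  exact ⟨fun k => x * ((List.ofFn f).take k).prod, by simp, key, by
    simp only []
    rw [List.take_of_length_le (by simp)]⟩

section lift
variable {H : Type*} [Group H] {g t s : ℕ} {m : Fin t → ℕ}

theorem lift_rels (f : Fin g ⊕ Fin g ⊕ Fin (t + s) → H)
    (h1 : ∀ i : Fin t, f (Sum.inr (Sum.inr (Fin.castAdd s i))) ^ m i = 1)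
    (h2 : (List.ofFn fun i : Fin g => f (Sum.inl i) * f (Sum.inr (Sum.inl i)) *
            (f (Sum.inl i))⁻¹ * (f (Sum.inr (Sum.inl i)))⁻¹).prod *
      (List.ofFn fun i : Fin (t + s) => f (Sum.inr (Sum.inr i))).prod = 1) :
    ∀ r ∈ surfaceRels g t s m, FreeGroup.lift f r = 1 := by
  rintro r (⟨i, rfl⟩ | rfl)
  · simpa using h1 i
  · rw [← h2]
    simp only [map_mul, map_list_prod, List.map_ofFn]
    simp [Function.comp_def]

theorem rel_torsion (i : Fin t) :
    (PresentedGroup.of (Sum.inr (Sum.inr (Fin.castAdd s i))) :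
      PresentedGroup (surfaceRels g t s m)) ^ m i = 1 := by
  have : PresentedGroup.mk (surfaceRels g t s m)
      (FreeGroup.of (Sum.inr (Sum.inr (Fin.castAdd s i))) ^ m i) = 1 :=
    PresentedGroup.one_of_mem (Or.inl ⟨i, rfl⟩)
  rw [map_pow] at this
  exact this

theorem rel_long :
    (List.ofFn fun i : Fin g => (PresentedGroup.of (Sum.inl i) :
      PresentedGroup (surfaceRels g t s m)) * PresentedGroup.of (Sum.inr (Sum.inl i)) *
            (PresentedGroup.of (Sum.inl i))⁻¹ * (PresentedGroup.of (Sum.inr (Sum.inl i)))⁻¹).prod *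
      (List.ofFn fun i : Fin (t + s) => (PresentedGroup.of (Sum.inr (Sum.inr i)) :
        PresentedGroup (surfaceRels g t s m))).prod = 1 := by
  have : PresentedGroup.mk (surfaceRels g t s m) _ = 1 :=
    PresentedGroup.one_of_mem (Or.inr rfl)
  rw [← this]
  simp only [map_mul, map_list_prod, List.map_ofFn]
  simp [Function.comp_def, PresentedGroup.of]

theorem gen_induction {rels : Set (FreeGroup (Fin g ⊕ Fin g ⊕ Fin (t + s)))}
    {C : PresentedGroup rels → Prop} (x : PresentedGroup rels)
    (h1 : C 1) (ho : ∀ x, C (PresentedGroup.of x)) (hi : ∀ x, C x → C x⁻¹)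
    (hm : ∀ x y, C x → C y → C (x * y)) : C x := by
  induction x using PresentedGroup.induction_on with
  | _ z =>
    induction z using FreeGroup.induction_on with
    | C1 => simpa using h1
    | of x => exact ho x
    | inv_of x h => rw [map_inv]; exact hi _ h
    | mul x y hx hy => rw [map_mul]; exact hm _ _ hx hy

end lift

section aff
variable {G M : Type*} [Group G] [AddCommGroup M] [Module (MonoidAlgebra ℤ G) M]

/-- Affine permutation. -/
noncomputable def aff (g : G) (u : M) : Equiv.Perm M where
  toFun v := MonoidAlgebra.of ℤ G g • v + u
  invFun v := MonoidAlgebra.of ℤ G g⁻¹ • (v - u)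
  left_inv v := by
    simp only [add_sub_cancel_right]
    rw [← mul_smul, ← map_mul]; simp [-MonoidAlgebra.of_apply]
  right_inv v := by
    simp only []
    rw [← mul_smul, ← map_mul]; simp [-MonoidAlgebra.of_apply]

theorem aff_apply (g : G) (u v : M) : aff g u v = MonoidAlgebra.of ℤ G g • v + u := rfl

theorem aff_mul (g h : G) (u w : M) :
    aff g u * aff h w = aff (g * h) (u + MonoidAlgebra.of ℤ G g • w) := by
  ext v
  simp only [Equiv.Perm.mul_apply, aff_apply, map_mul, mul_smul, smul_add]
  abel

theorem aff_one : (aff (1 : G) (0 : M)) = 1 := by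
  ext v
  simp [aff_apply, -MonoidAlgebra.of_apply]

theorem aff_inv (g : G) (u : M) :
    (aff g u)⁻¹ = aff g⁻¹ (- (MonoidAlgebra.of ℤ G g⁻¹ • u)) := by
  rw [inv_eq_iff_mul_eq_one, aff_mul, smul_neg, ← mul_smul, ← map_mul]
  simp [-MonoidAlgebra.of_apply, aff_one]

theorem aff_tele : ∀ (n : ℕ) (f : Fin n → Equiv.Perm M) (p : ℕ → G) (z : Fin n → M)
    (_ : ∀ (i : Fin n) (u : M), aff (p i) u * f i = aff (p (i + 1)) (u + z i)) (u : M),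
    aff (p 0) u * (List.ofFn f).prod = aff (p n) (u + ∑ i, z i)
  | 0, f, p, z, _, u => by simp
  | n + 1, f, p, z, h, u => by
    have h0 := h 0 u
    have := aff_tele n (fun i => f i.succ) (fun k => p (k + 1)) (fun i => z i.succ) (fun i => by
      simpa using h i.succ) (u + z 0)
    simp only [List.ofFn_succ, List.prod_cons, Fin.sum_univ_succ]
    rw [← mul_assoc]
    simp only [Fin.val_zero] at h0
    rw [h0, ← add_assoc]
    exact this

end aff

theorem D_tele {G : Type*} [Group G] (D : G → MonoidAlgebra ℤ G)
    (hD : ∀ x y, D (x * y) = D x + D y * MonoidAlgebra.of ℤ G x⁻¹) (n : ℕ) (f : Fin n → G)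
    (q : ℕ → G) (h : ∀ i : Fin n, q (i + 1) = q i * f i) :
    D (q n) = D (q 0) + ∑ i : Fin n, D (f i) * MonoidAlgebra.of ℤ G (q i)⁻¹ := by
  induction n with
  | zero => simp
  | succ n ih =>
    rw [Fin.sum_univ_castSucc, ← add_assoc]
    have := ih (fun i => f i.castSucc) (fun i => by simpa using h i.castSucc)
    simp only [Fin.val_castSucc] at *
    rw [← this]
    have h2 := h (Fin.last n)
    simp only [Fin.val_last] at *
    rw [h2, hD]

theorem Lam {G M : Type*} [Group G] [AddCommGroup M] [Module (MonoidAlgebra ℤ G) M]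
    (L : G → M) (hL : ∀ x y, L (x * y) = L x + MonoidAlgebra.of ℤ G x • L y) :
    ∃ Λ : MonoidAlgebra ℤ G →+ M,
      ∀ u h, Λ (u * (MonoidAlgebra.of ℤ G h - 1)) = u • L h := by
  let Λ : MonoidAlgebra ℤ G →+ M :=
    (Finsupp.liftAddHom (fun g => zmultiplesHom M (L g))).comp
      MonoidAlgebra.coeffAddEquiv.toAddMonoidHom
  have hΛ : ∀ g, Λ (MonoidAlgebra.of ℤ G g) = L g := by
    intro g
    simp [Λ, MonoidAlgebra.of_apply]
  refine ⟨Λ, fun u h => ?_⟩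
  induction u using MonoidAlgebra.induction_on with
  | of g => rw [mul_sub, mul_one, ← map_mul, map_sub, hΛ, hΛ, hL]; abel
  | add x y hx hy => rw [add_mul, map_add, hx, hy, add_smul]
  | smul r x hx => rw [smul_mul_assoc, map_zsmul, hx, smul_assoc]


section steps
variable {G M : Type*} [Group G] [AddCommGroup M] [Module (MonoidAlgebra ℤ G) M]

theorem comm_step (p a b : G) (u x y : M) :
    aff p⁻¹ u * (aff (p * a * b⁻¹ * a⁻¹ * p⁻¹) (MonoidAlgebra.of ℤ G p • x) *
      aff (p * a * b * a⁻¹ * b⁻¹ * a⁻¹ * p⁻¹)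
        (-(MonoidAlgebra.of ℤ G (p * a * b * a⁻¹ * b⁻¹) • y)) *
      (aff (p * a * b⁻¹ * a⁻¹ * p⁻¹) (MonoidAlgebra.of ℤ G p • x))⁻¹ *
      (aff (p * a * b * a⁻¹ * b⁻¹ * a⁻¹ * p⁻¹)
        (-(MonoidAlgebra.of ℤ G (p * a * b * a⁻¹ * b⁻¹) • y)))⁻¹) =
    aff (p * (a * b * a⁻¹ * b⁻¹))⁻¹ (u + ((1 - MonoidAlgebra.of ℤ G a⁻¹) • x +
      (1 - MonoidAlgebra.of ℤ G b⁻¹) • y)) := by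
  simp only [aff_inv, aff_mul, smul_neg, ← mul_smul, ← map_mul, smul_add, sub_smul, one_smul,
    neg_neg]
  simp only [mul_assoc, mul_inv_rev, inv_inv, inv_mul_cancel_left, mul_inv_cancel_left,
    inv_mul_cancel, mul_inv_cancel, mul_one, map_one, one_smul]
  congr 1
  abel

theorem c_step (q c : G) (u x : M) :
    aff q⁻¹ u * aff (q * c⁻¹ * q⁻¹) (MonoidAlgebra.of ℤ G q • x -
      MonoidAlgebra.of ℤ G (q * c⁻¹ * q⁻¹) • MonoidAlgebra.of ℤ G q • x) =
    aff (q * c)⁻¹ (u + (1 - MonoidAlgebra.of ℤ G c⁻¹) • x) := by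
  simp only [aff_mul, smul_sub, ← mul_smul, ← map_mul, sub_smul, one_smul]
  simp only [mul_assoc, mul_inv_rev, inv_mul_cancel_left,
    inv_mul_cancel, mul_one, map_one, one_smul]

theorem aff_pow (C : G) (w : M) (k : ℕ) :
    (aff C (w - MonoidAlgebra.of ℤ G C • w)) ^ k =
      aff (C ^ k) (w - MonoidAlgebra.of ℤ G (C ^ k) • w) := by
  induction k with
  | zero => simp [-MonoidAlgebra.of_apply, aff_one]
  | succ k ih =>
    rw [pow_succ, ih, aff_mul, smul_sub, ← mul_smul, ← map_mul, pow_succ]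
    congr 1
    abel

end steps

/-- The presented group. -/
abbrev SG (g t s : ℕ) (m : Fin t → ℕ) := PresentedGroup (surfaceRels g t s m)

set_option maxHeartbeats 1000000 in
theorem core {g t s : ℕ} {m : Fin t → ℕ}
    (D : SG g t s m →
      MonoidAlgebra ℤ (SG g t s m))
    (hD : ∀ x y, D (x * y) = D x + D y * MonoidAlgebra.of ℤ (SG g t s m) x⁻¹)
    (hc : ∀ i : Fin (t + s), ∃ ε, D (PresentedGroup.of (Sum.inr (Sum.inr i))) =
      ε * (MonoidAlgebra.of ℤ (SG g t s m) (PresentedGroup.of (Sum.inr (Sum.inr i)))⁻¹ - 1)) :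
    ∃ V, ∀ x, D x = V * (1 - MonoidAlgebra.of ℤ (SG g t s m) x⁻¹) := by
  classical
  choose ε hε using hc
  have hlong := rel_long (g := g) (t := t) (s := s) (m := m)
  have htors := rel_torsion (g := g) (t := t) (s := s) (m := m)
  let a : Fin g → (SG g t s m) := fun i => PresentedGroup.of (Sum.inl i)
  let b : Fin g → (SG g t s m) := fun i => PresentedGroup.of (Sum.inr (Sum.inl i))
  let c : Fin (t + s) → (SG g t s m) := fun i => PresentedGroup.of (Sum.inr (Sum.inr i))
  let cm : Fin g → (SG g t s m) := fun i => a i * b i * (a i)⁻¹ * (b i)⁻¹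
  obtain ⟨P, hP0, hPs, hPg⟩ := exists_prefix cm 1
  obtain ⟨Q, hQ0, hQs, hQn⟩ := exists_prefix c (P g)
  have hQn1 : Q (t + s) = 1 := by
    rw [hQn, hPg, one_mul]; exact hlong
  -- the reflection
  let θg : Fin g ⊕ Fin g ⊕ Fin (t + s) → (SG g t s m) := Sum.elim
    (fun i => P i * a i * (b i)⁻¹ * (a i)⁻¹ * (P i)⁻¹)
    (Sum.elim (fun i => P i * a i * b i * (a i)⁻¹ * (b i)⁻¹ * (a i)⁻¹ * (P i)⁻¹)
      (fun i => Q i * (c i)⁻¹ * (Q i)⁻¹))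
  have hCpow : ∀ i : Fin t, θg (Sum.inr (Sum.inr (Fin.castAdd s i))) ^ m i = 1 := by
    intro i
    simp only [θg, Sum.elim_inr, conj_pow, inv_pow]
    rw [show c (Fin.castAdd s i) ^ m i = 1 from htors i]
    simp
  have hcmθ : ∀ i : Fin g, (P (i + 1))⁻¹ = (P i)⁻¹ * (θg (Sum.inl i) * θg (Sum.inr (Sum.inl i)) *
            (θg (Sum.inl i))⁻¹ * (θg (Sum.inr (Sum.inl i)))⁻¹) := by
    intro i
    simp only [hPs, cm, θg, Sum.elim_inl, Sum.elim_inr]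
    group
  have hcθ : ∀ i : Fin (t + s), (Q (i + 1))⁻¹ = (Q i)⁻¹ * θg (Sum.inr (Sum.inr i)) := by
    intro i
    simp only [hQs, θg, Sum.elim_inr]
    group
  have hθrel : ∀ r ∈ surfaceRels g t s m, FreeGroup.lift θg r = 1 := by
    apply lift_rels θg hCpow
    have h1 := tele g _ (fun k => (P k)⁻¹) hcmθ
    have h2 := tele (t + s) _ (fun k => (Q k)⁻¹) hcθ
    simp only [hP0, hQ0, hQn1, inv_one, one_mul] at h1 h2
    rw [h1, h2]
  let θ : (SG g t s m) →* (SG g t s m) := PresentedGroup.toGroup hθrel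
  have hθ : ∀ x, θ (PresentedGroup.of x) = θg x := fun x => PresentedGroup.toGroup.of hθrel
  have hθP : ∀ k ≤ g, θ (P k) = (P k)⁻¹ := by
    intro k
    induction k with
    | zero => intro _; simp [hP0]
    | succ k ih =>
      intro hk
      have e1 := hPs ⟨k, hk⟩
      have e2 := hcmθ ⟨k, hk⟩
      simp only [cm, a, b] at e1 e2
      rw [e2, e1]
      simp only [map_mul, map_inv, hθ]
      rw [ih (by omega)]
  have hθQ : ∀ k ≤ t + s, θ (Q k) = (Q k)⁻¹ := by
    intro k
    induction k with
    | zero => intro _; rw [hQ0]; exact hθP g le_rfl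
    | succ k ih =>
      intro hk
      have e1 := hQs ⟨k, hk⟩
      have e2 := hcθ ⟨k, hk⟩
      simp only [c] at e1 e2
      rw [e2, e1, map_mul, hθ, ih (by omega)]
  have hθa : ∀ i, θ (a i) = P i * a i * (b i)⁻¹ * (a i)⁻¹ * (P i)⁻¹ := fun i => hθ _
  have hθb : ∀ i, θ (b i) = P i * a i * b i * (a i)⁻¹ * (b i)⁻¹ * (a i)⁻¹ * (P i)⁻¹ :=
    fun i => hθ _
  have hθc : ∀ i, θ (c i) = Q i * (c i)⁻¹ * (Q i)⁻¹ := fun i => hθ _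
  have hθθ : ∀ x, θ (θ x) = x := by
    have : θ.comp θ = MonoidHom.id (SG g t s m) := by
      apply PresentedGroup.ext
      rintro (i | i | i)
      · change θ (θ (a i)) = a i
        rw [hθa]
        simp only [map_mul, map_inv, hθa, hθb, hθP i i.2.le]
        group
      · change θ (θ (b i)) = b i
        rw [hθb]
        simp only [map_mul, map_inv, hθa, hθb, hθP i i.2.le]
        group
      · change θ (θ (c i)) = c i
        rw [hθc]
        simp only [map_mul, map_inv, hθc, hθQ i i.2.le]
        group
    intro x
    exact DFunLike.congr_fun this x
  -- the module
  let y : (Fin g ⊕ Fin g ⊕ Fin (t + s)) → MonoidAlgebra ℤ (SG g t s m) :=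
    fun x => 1 - MonoidAlgebra.of ℤ (SG g t s m) (PresentedGroup.of x)⁻¹
  let N : Submodule (MonoidAlgebra ℤ (SG g t s m)) ((Fin g ⊕ Fin g ⊕ Fin (t + s)) → MonoidAlgebra ℤ (SG g t s m)) :=
    Submodule.span _ {y}
  let M := ((Fin g ⊕ Fin g ⊕ Fin (t + s)) → MonoidAlgebra ℤ (SG g t s m)) ⧸ N
  let bs : (Fin g ⊕ Fin g ⊕ Fin (t + s)) → M := fun x => N.mkQ (Pi.single x 1)
  have hbs : ∀ w : (Fin g ⊕ Fin g ⊕ Fin (t + s)) → MonoidAlgebra ℤ (SG g t s m),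
      ∑ x, w x • bs x = N.mkQ w := by
    intro w
    simp only [bs, ← map_smul, ← map_sum]
    congr 1
    conv_rhs => rw [pi_eq_sum_univ' w]
  let el : (Fin g ⊕ Fin g ⊕ Fin (t + s)) → M := Sum.elim
    (fun i => MonoidAlgebra.of ℤ (SG g t s m) (P i) • bs (Sum.inl i))
    (Sum.elim (fun i => -(MonoidAlgebra.of ℤ (SG g t s m) (P i * a i * b i * (a i)⁻¹ * (b i)⁻¹) • bs (Sum.inr (Sum.inl i))))
      (fun i => MonoidAlgebra.of ℤ (SG g t s m) (Q i) • bs (Sum.inr (Sum.inr i)) -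
        MonoidAlgebra.of ℤ (SG g t s m) (Q i * (c i)⁻¹ * (Q i)⁻¹) • MonoidAlgebra.of ℤ (SG g t s m) (Q i) • bs (Sum.inr (Sum.inr i))))
  let F : (Fin g ⊕ Fin g ⊕ Fin (t + s)) → Equiv.Perm M := fun x => aff (θg x) (el x)
  have hFrel : ∀ r ∈ surfaceRels g t s m, FreeGroup.lift F r = 1 := by
    apply lift_rels F
    · intro i
      have h := hCpow i
      simp only [F, el, θg, Sum.elim_inr] at h ⊢
      rw [aff_pow, h, map_one, one_smul, sub_self, aff_one]
    · have h1 := aff_tele g (fun i : Fin g => F (Sum.inl i) * F (Sum.inr (Sum.inl i)) *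
            (F (Sum.inl i))⁻¹ * (F (Sum.inr (Sum.inl i)))⁻¹) (fun k => (P k)⁻¹)
            (fun i => y (Sum.inl i) • bs (Sum.inl i) +
              y (Sum.inr (Sum.inl i)) • bs (Sum.inr (Sum.inl i)))
            (by
              intro i u
              simp only [hPs]
              exact comm_step (P i) (a i) (b i) u _ _) 0
      have h2 := aff_tele (t + s) (fun i => F (Sum.inr (Sum.inr i))) (fun k => (Q k)⁻¹)
            (fun i => y (Sum.inr (Sum.inr i)) • bs (Sum.inr (Sum.inr i)))
            (by
              intro i u
              simp only [hQs]
              exact c_step (Q i) (c i) u _)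
      simp only [hP0, hQ0, hQn1, inv_one, aff_one, one_mul] at h1 h2
      rw [h1, h2, zero_add, Finset.sum_add_distrib]
      have h3 := hbs y
      rw [Fintype.sum_sum_type, Fintype.sum_sum_type, ← add_assoc] at h3
      rw [h3]
      have : N.mkQ y = 0 := by
        rw [Submodule.mkQ_apply, Submodule.Quotient.mk_eq_zero]
        exact Submodule.mem_span_singleton_self y
      rw [this, aff_one]
  let Ψ : (SG g t s m) →* Equiv.Perm M := PresentedGroup.toGroup hFrel
  have hΨ : ∀ x, Ψ (PresentedGroup.of x) = aff (θg x) (el x) :=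
    fun x => PresentedGroup.toGroup.of hFrel
  have hΨex : ∀ x, ∃ u, Ψ x = aff (θ x) u := by
    intro x
    induction x using gen_induction with
    | h1 => exact ⟨0, by simp [aff_one]⟩
    | ho x => exact ⟨el x, by rw [hΨ, hθ]⟩
    | hi x h =>
      obtain ⟨u, hu⟩ := h
      exact ⟨_, by rw [map_inv Ψ, hu, aff_inv, map_inv θ]⟩
    | hm x z hx hz =>
      obtain ⟨u, hu⟩ := hx
      obtain ⟨w, hw⟩ := hz
      exact ⟨_, by rw [map_mul, hu, hw, aff_mul, map_mul]⟩
  choose L' hL' using hΨex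
  have aff_inj : ∀ (h : (SG g t s m)) (u w : M), aff h u = aff h w → u = w := by
    intro h u w huw
    have := DFunLike.congr_fun huw 0
    simpa [aff_apply] using this
  have hLmul : ∀ x z, L' (θ (x * z)) = L' (θ x) + MonoidAlgebra.of ℤ (SG g t s m) x • L' (θ z) := by
    intro x z
    have h := hL' (θ (x * z))
    rw [map_mul, map_mul, hL', hL', aff_mul, map_mul] at h
    have := aff_inj _ _ _ h
    rw [hθθ] at this
    rw [map_mul θ]
    exact this.symm
  have hLgen : ∀ x, L' (PresentedGroup.of x) = el x := by
    intro x
    have h := hL' (PresentedGroup.of x)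
    rw [hΨ, hθ] at h
    exact (aff_inj _ _ _ h).symm
  obtain ⟨Λ, hΛ⟩ := Lam (fun x => L' (θ x)) hLmul
  -- the closing relation
  have hD1 : D 1 = 0 := by
    have := hD 1 1
    simpa [-MonoidAlgebra.of_apply] using this
  have hDinv : ∀ x, D x⁻¹ = - (D x * MonoidAlgebra.of ℤ (SG g t s m) x) := by
    intro x
    have := hD x⁻¹ x
    rw [inv_mul_cancel, hD1, inv_inv] at this
    exact eq_neg_of_add_eq_zero_left this.symm
  let U : (Fin g ⊕ Fin g ⊕ Fin (t + s)) → MonoidAlgebra ℤ (SG g t s m) := Sum.elim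
    (fun i => D (a i) * MonoidAlgebra.of ℤ (SG g t s m) (P i)⁻¹)
    (Sum.elim (fun i => -(D (b i) * MonoidAlgebra.of ℤ (SG g t s m) (b i * a i * (b i)⁻¹ * (a i)⁻¹ * (P i)⁻¹)))
      (fun i => -(ε i * MonoidAlgebra.of ℤ (SG g t s m) (Q i)⁻¹)))
  have hsum : ∑ x, U x * (MonoidAlgebra.of ℤ (SG g t s m) (θg x) - 1) = 0 := by
    have h1 := D_tele D hD g cm P hPs
    have h2 := D_tele D hD (t + s) c Q hQs
    rw [hQn1, hQ0, h1, hP0, hD1, zero_add] at h2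
    rw [Fintype.sum_sum_type, Fintype.sum_sum_type, ← add_assoc, ← Finset.sum_add_distrib]
    rw [← neg_eq_zero, h2, neg_add, ← Finset.sum_neg_distrib, ← Finset.sum_neg_distrib]
    congr 1
    · refine Finset.sum_congr rfl fun i _ => ?_
      simp only [U, θg, Sum.elim_inl, Sum.elim_inr, cm, hD, hDinv]
      change _ = (D (a i) + D (b i) * MonoidAlgebra.of ℤ (SG g t s m) _ + -(D (a i) * _) * MonoidAlgebra.of ℤ (SG g t s m) _ + -(D (b i) * _) * MonoidAlgebra.of ℤ (SG g t s m) _) * MonoidAlgebra.of ℤ (SG g t s m) _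
      simp only [mul_sub, neg_mul, add_mul, mul_assoc, ← map_mul, mul_one, mul_inv_rev, inv_inv,
        inv_mul_cancel_left, mul_inv_cancel_left,
        inv_mul_cancel, mul_inv_cancel, map_one]
      abel
    · refine Finset.sum_congr rfl fun i _ => ?_
      simp only [U, θg, Sum.elim_inr]
      rw [show D (c i) = ε i * (MonoidAlgebra.of ℤ (SG g t s m) (c i)⁻¹ - 1) from hε i]
      simp only [mul_sub, sub_mul, neg_mul, mul_assoc, ← map_mul, mul_one,
        inv_mul_cancel_left]
      abel
  have hU : ∀ x, U x • el x = D (PresentedGroup.of x) • bs x := by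
    rintro (i | i | i)
    · simp only [U, el, Sum.elim_inl]
      rw [← mul_smul, mul_assoc, ← map_mul, inv_mul_cancel, map_one, mul_one]
    · simp only [U, el, Sum.elim_inr, Sum.elim_inl]
      rw [neg_smul_neg, ← mul_smul, mul_assoc, ← map_mul]
      simp only [mul_assoc, inv_mul_cancel_left, mul_inv_cancel_left, mul_inv_cancel, map_one,
        mul_one]
      rfl
    · simp only [U, el, Sum.elim_inr]
      rw [show D (PresentedGroup.of (Sum.inr (Sum.inr i))) = ε i * (MonoidAlgebra.of ℤ (SG g t s m) (c i)⁻¹ - 1) from hε i]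
      rw [← mul_smul (MonoidAlgebra.of ℤ (SG g t s m) _) (MonoidAlgebra.of ℤ (SG g t s m) _), ← sub_smul, ← mul_smul]
      congr 1
      simp only [mul_sub, neg_mul, mul_assoc, ← map_mul, mul_one,
        inv_mul_cancel_left, inv_mul_cancel, map_one]
      abel
  have hmem : N.mkQ (fun x => D (PresentedGroup.of x)) = 0 := by
    rw [← hbs, ← map_zero Λ, ← hsum, map_sum]
    refine Finset.sum_congr rfl fun x _ => ?_
    rw [hΛ, ← hU, ← hθ, hθθ, hLgen]
  rw [Submodule.mkQ_apply, Submodule.Quotient.mk_eq_zero, Submodule.mem_span_singleton] at hmem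
  obtain ⟨V, hV⟩ := hmem
  refine ⟨V, fun x => ?_⟩
  induction x using gen_induction with
  | h1 => simp [hD1, -MonoidAlgebra.of_apply]
  | ho x => exact (congrFun hV x).symm
  | hi x h =>
    rw [hDinv, h]
    change -(V * (1 - MonoidAlgebra.of ℤ (SG g t s m) _) * MonoidAlgebra.of ℤ (SG g t s m) _) = V * (1 - MonoidAlgebra.of ℤ (SG g t s m) _)
    simp only [mul_sub, sub_mul, mul_assoc, ← map_mul, inv_mul_cancel, mul_one, map_one, inv_inv]
    abel
  | hm x z hx hz =>
    rw [hD, hx, hz, mul_inv_rev, map_mul]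
    simp only [mul_sub, sub_mul, mul_assoc, mul_one]
    abel

section affR
variable {G : Type*} [Group G]

/-- Right affine permutation of the group ring. -/
noncomputable def affR (g : G) (u : MonoidAlgebra ℤ G) : Equiv.Perm (MonoidAlgebra ℤ G) where
  toFun v := v * MonoidAlgebra.of ℤ G g⁻¹ + u
  invFun v := (v - u) * MonoidAlgebra.of ℤ G g
  left_inv v := by
    simp only [add_sub_cancel_right]
    rw [mul_assoc, ← map_mul]; simp [-MonoidAlgebra.of_apply]
  right_inv v := by
    simp only []
    rw [mul_assoc, ← map_mul]; simp [-MonoidAlgebra.of_apply]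

theorem affR_apply (g : G) (u v : MonoidAlgebra ℤ G) :
    affR g u v = v * MonoidAlgebra.of ℤ G g⁻¹ + u := rfl

theorem affR_mul (g h : G) (u w : MonoidAlgebra ℤ G) :
    affR g u * affR h w = affR (g * h) (u + w * MonoidAlgebra.of ℤ G g⁻¹) := by
  ext1 v
  simp only [Equiv.Perm.mul_apply, affR_apply, mul_inv_rev, map_mul, add_mul, mul_assoc]
  abel

theorem affR_one : affR (1 : G) 0 = 1 := by
  ext1 v
  simp [affR_apply, -MonoidAlgebra.of_apply]

end affR

theorem exists_D {G Γ₁ Γ₂ : Type*} [Group G] [Group Γ₁] [Group Γ₂]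
    (φ : G ≃* Monoid.Coprod Γ₁ Γ₂) :
    ∃ D : G → MonoidAlgebra ℤ G,
      (∀ x y, D (x * y) = D x + D y * MonoidAlgebra.of ℤ _ x⁻¹) ∧
      (∀ x : Γ₁, D (φ.symm (Monoid.Coprod.inl x)) = 0) ∧
      (∀ x : Γ₂, D (φ.symm (Monoid.Coprod.inr x)) =
        1 - MonoidAlgebra.of ℤ _ (φ.symm (Monoid.Coprod.inr x))⁻¹) := by
  let f₁ : Γ₁ →* Equiv.Perm (MonoidAlgebra ℤ G) :=
    { toFun := fun x => affR (φ.symm (Monoid.Coprod.inl x)) 0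
      map_one' := by simp [affR_one]
      map_mul' := fun x y => by rw [affR_mul, map_mul, map_mul]; simp }
  let f₂ : Γ₂ →* Equiv.Perm (MonoidAlgebra ℤ G) :=
    { toFun := fun x => affR (φ.symm (Monoid.Coprod.inr x))
        (1 - MonoidAlgebra.of ℤ _ (φ.symm (Monoid.Coprod.inr x))⁻¹)
      map_one' := by simp [affR_one, -MonoidAlgebra.of_apply]
      map_mul' := fun x y => by
        rw [affR_mul, map_mul, map_mul]
        congr 1
        rw [mul_inv_rev, map_mul, sub_mul]
        simp [-MonoidAlgebra.of_apply] }
  let Ψ := Monoid.Coprod.lift f₁ f₂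
  have h : ∀ w, ∃ u, Ψ w = affR (φ.symm w) u := by
    intro w
    induction w using Monoid.Coprod.induction_on with
    | inl x => exact ⟨_, Monoid.Coprod.lift_apply_inl _ _ _⟩
    | inr x => exact ⟨_, Monoid.Coprod.lift_apply_inr _ _ _⟩
    | mul x y hx hy =>
      obtain ⟨u, hu⟩ := hx
      obtain ⟨v, hv⟩ := hy
      exact ⟨_, by rw [map_mul, hu, hv, affR_mul, map_mul]⟩
  choose D hD using h
  have inj : ∀ (h : G) (u w : MonoidAlgebra ℤ G), affR h u = affR h w → u = w := by
    intro h u w huw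
    have := DFunLike.congr_fun huw 0
    simpa [affR_apply] using this
  refine ⟨fun x => D (φ x), fun x y => ?_, fun x => ?_, fun x => ?_⟩
  · have h := hD (φ (x * y))
    rw [map_mul, map_mul, hD, hD, affR_mul, map_mul] at h
    have := inj _ _ _ h
    simpa [-MonoidAlgebra.of_apply] using this.symm
  · have h := hD (Monoid.Coprod.inl x)
    simp only [MulEquiv.apply_symm_apply]
    exact (inj _ _ _ ((Monoid.Coprod.lift_apply_inl f₁ f₂ x).symm.trans h)).symm
  · have h := hD (Monoid.Coprod.inr x)
    simp only [MulEquiv.apply_symm_apply]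
    exact (inj _ _ _ ((Monoid.Coprod.lift_apply_inr f₁ f₂ x).symm.trans h)).symm

theorem exists_perm {S : Type*} [DecidableEq S] (p q p' q' : S) (h : p ≠ q) (h' : p' ≠ q') :
    ∃ τ : Equiv.Perm S, τ p = p' ∧ τ q = q' := by
  refine ⟨Equiv.swap (Equiv.swap p p' q) q' * Equiv.swap p p', ?_, ?_⟩
  · rw [Equiv.Perm.mul_apply, Equiv.swap_apply_left, Equiv.swap_apply_of_ne_of_ne _ h']
    intro h2
    apply h
    have h3 := congrArg (Equiv.swap p p') h2
    simpa using h3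
  · simp

theorem exists_action {Γ₁ Γ₂ : Type*} [Group Γ₁] [Group Γ₂] (x : Γ₁) (y : Γ₂)
    (hx : x ≠ 1) (hy : y ≠ 1) :
    ∃ (α : Monoid.Coprod Γ₁ Γ₂ →* Equiv.Perm (Γ₁ × Γ₂)) (z : Γ₁ × Γ₂),
      α (Monoid.Coprod.inl x * Monoid.Coprod.inr y) z = z ∧ α (Monoid.Coprod.inr y) z ≠ z := by
  classical
  obtain ⟨τ, h1, h2⟩ := exists_perm ((1 : Γ₁), (1 : Γ₂)) (1, y) (x, 1) (1, 1)
    (by simpa using hy.symm) (by simpa using hx)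
  let f₁ : Γ₁ →* Equiv.Perm (Γ₁ × Γ₂) :=
    { toFun := fun a => Equiv.prodCongr (Equiv.mulLeft a) (Equiv.refl _)
      map_one' := by ext z <;> simp
      map_mul' := fun a b => by ext z <;> simp [mul_assoc] }
  let f₂ : Γ₂ →* Equiv.Perm (Γ₁ × Γ₂) :=
    { toFun := fun a => τ * Equiv.prodCongr (Equiv.refl _) (Equiv.mulLeft a) * τ⁻¹
      map_one' := by ext z <;> simp
      map_mul' := fun a b => by ext z <;> simp [mul_assoc, Prod.map] }
  have hy' : f₂ y (x, 1) = (1, 1) := by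
    rw [← h1]
    simp [f₂, h2]
  refine ⟨Monoid.Coprod.lift f₁ f₂, (x, 1), ?_, ?_⟩
  · rw [map_mul, Equiv.Perm.mul_apply, Monoid.Coprod.lift_apply_inl,
      Monoid.Coprod.lift_apply_inr, hy']
    simp [f₁]
  · rw [Monoid.Coprod.lift_apply_inr, hy']
    simpa using hx.symm

theorem trivial_isFP (Γ₁ : Type*) [Group Γ₁] [Subsingleton Γ₁] :
    IsFreeProductOfCyclicGroups Γ₁ := by
  refine ⟨Empty, fun _ => Unit, fun i => i.elim, fun i => i.elim, ?_⟩
  let _ : ∀ i : Empty, Monoid Unit := fun i => i.elim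
  have : Subsingleton (Monoid.CoprodI (fun _ : Empty => Unit)) := by
    constructor
    intro x y
    have key : ∀ x : Monoid.CoprodI (fun _ : Empty => Unit), x = 1 := by
      intro x
      induction x using Monoid.CoprodI.induction_on with
      | one => rfl
      | of i => exact i.elim
      | mul x y hx hy => rw [hx, hy, one_mul]
    rw [key x, key y]
  exact ⟨{ toFun := fun _ => 1, invFun := fun _ => 1,
           left_inv := fun _ => Subsingleton.elim _ _,
           right_inv := fun _ => this.elim _ _,
           map_mul' := fun _ _ => this.elim _ _ }⟩

theorem push {G S : Type*} [Group G] (α : G →* Equiv.Perm S) (z : S) :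
    ∃ Λ : MonoidAlgebra ℤ G →+ (S →₀ ℤ),
      (∀ g, Λ (MonoidAlgebra.of ℤ G g) = Finsupp.single (α g z) 1) ∧
      ∀ V h, α h z = z → Λ (V * MonoidAlgebra.of ℤ G h) = Λ V := by
  let Λ : MonoidAlgebra ℤ G →+ (S →₀ ℤ) :=
    (Finsupp.mapDomain.addMonoidHom (fun g => α g z)).comp
      MonoidAlgebra.coeffAddEquiv.toAddMonoidHom
  have hΛ : ∀ g, Λ (MonoidAlgebra.of ℤ G g) = Finsupp.single (α g z) 1 := by
    intro g
    simp [Λ, MonoidAlgebra.of_apply]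
  refine ⟨Λ, hΛ, fun V h hz => ?_⟩
  induction V using MonoidAlgebra.induction_on with
  | of g => rw [← map_mul, hΛ, hΛ, map_mul, Equiv.Perm.mul_apply, hz]
  | add x y hx hy => rw [add_mul, map_add, hx, hy, map_add]
  | smul r x hx => rw [smul_mul_assoc, map_zsmul, hx, map_zsmul]

end SurfAux

/-- Suppose `Γ ≅ Γ₁ * Γ₂` is a free product and `Γ` has the standard
presentation of a Fuchsian group of signature `(g; m₁,…,m_t; s)`, with each generator
`γᵢ` lying in `Γ₁` or `Γ₂` (under the free product decomposition).  Then `Γ₁` or `Γ₂`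
is isomorphic to a free product of cyclic groups. -/
theorem free_product_factor_is_free_product_of_cyclics
    (g t s : ℕ) (m : Fin t → ℕ) (hm : ∀ i, 2 ≤ m i)
    (Γ Γ₁ Γ₂ : Type*) [Group Γ] [Group Γ₁] [Group Γ₂]
    (e : Γ ≃* PresentedGroup (surfaceRels g t s m))
    (ψ : Γ ≃* Monoid.Coprod Γ₁ Γ₂)
    (hγ : ∀ i : Fin (t + s),
      (∃ x : Γ₁, ψ (e.symm (PresentedGroup.of (Sum.inr (Sum.inr i)))) = Monoid.Coprod.inl x) ∨
      (∃ x : Γ₂, ψ (e.symm (PresentedGroup.of (Sum.inr (Sum.inr i)))) = Monoid.Coprod.inr x)) :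
    IsFreeProductOfCyclicGroups Γ₁ ∨ IsFreeProductOfCyclicGroups Γ₂ := by
  let φ : PresentedGroup (surfaceRels g t s m) ≃* Monoid.Coprod Γ₁ Γ₂ := e.symm.trans ψ
  obtain ⟨D, hD, hD1, hD2⟩ := SurfAux.exists_D φ
  obtain ⟨V, hV⟩ := SurfAux.core D hD (by
    intro i
    rcases hγ i with ⟨x, hx⟩ | ⟨x, hx⟩
    · have h : PresentedGroup.of (Sum.inr (Sum.inr i)) = φ.symm (Monoid.Coprod.inl x) := by
        rw [MulEquiv.eq_symm_apply]; exact hx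
      exact ⟨0, by rw [h, hD1, zero_mul]⟩
    · have h : PresentedGroup.of (Sum.inr (Sum.inr i)) = φ.symm (Monoid.Coprod.inr x) := by
        rw [MulEquiv.eq_symm_apply]; exact hx
      exact ⟨-1, by rw [h, hD2, neg_one_mul, neg_sub]⟩)
  by_contra hcon
  rw [not_or] at hcon
  have n1 : ∃ x : Γ₁, x ≠ 1 := by
    by_contra h
    push Not at h
    have : Subsingleton Γ₁ := ⟨fun a b => by rw [h a, h b]⟩
    exact hcon.1 (SurfAux.trivial_isFP Γ₁)
  have n2 : ∃ x : Γ₂, x ≠ 1 := by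
    by_contra h
    push Not at h
    have : Subsingleton Γ₂ := ⟨fun a b => by rw [h a, h b]⟩
    exact hcon.2 (SurfAux.trivial_isFP Γ₂)
  obtain ⟨x, hx⟩ := n1
  obtain ⟨y, hy⟩ := n2
  obtain ⟨α, z, hz1, hz2⟩ := SurfAux.exists_action x y hx hy
  obtain ⟨Λ, hΛ, hΛz⟩ := SurfAux.push (α.comp φ.toMonoidHom) z
  set X := φ.symm (Monoid.Coprod.inl x) with hX
  set Y := φ.symm (Monoid.Coprod.inr y) with hY
  have e1 : V * MonoidAlgebra.of ℤ _ X = V := by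
    have h1 := hD1 x⁻¹
    rw [hV, map_inv (Monoid.Coprod.inl : Γ₁ →* Monoid.Coprod Γ₁ Γ₂), map_inv φ.symm, inv_inv, mul_sub, mul_one, sub_eq_zero] at h1
    exact h1.symm
  have e2 : V * MonoidAlgebra.of ℤ _ Y = V - 1 + MonoidAlgebra.of ℤ _ Y := by
    have h1 := hD2 y⁻¹
    rw [hV, map_inv (Monoid.Coprod.inr : Γ₂ →* Monoid.Coprod Γ₁ Γ₂), map_inv φ.symm, inv_inv, mul_sub, mul_one] at h1
    rw [sub_add, ← h1]; abel
  have e3 : V * MonoidAlgebra.of ℤ _ (X * Y) = V - 1 + MonoidAlgebra.of ℤ _ Y := by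
    rw [map_mul, ← mul_assoc, e1, e2]
  have h3 := hΛz V (X * Y) (by simpa [hX, hY] using hz1)
  rw [e3, map_add, map_sub, ← map_one (MonoidAlgebra.of ℤ _), hΛ, hΛ, map_one] at h3
  have h4 : Finsupp.single ((α.comp φ.toMonoidHom) Y z) (1 : ℤ) = Finsupp.single z 1 := by
    have : ∀ p q r : (Γ₁ × Γ₂) →₀ ℤ, p - q + r = p → r = q := by
      intro p q r h
      rw [sub_add, sub_eq_self, sub_eq_zero] at h
      exact h.symm
    exact this _ _ _ h3
  rw [Finsupp.single_left_inj one_ne_zero] at h4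
  exact hz2 (by simpa [hY] using h4)
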